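/- (Closure operation Cl(T−) on quiver data, UP case.) Let m, n ∈ ℕ, let S⁺, A⁺ ∈ ℤ^m and S⁻, A⁻ ∈ ℤ^n, and let Q be a symmetric (m+n)×(m+n) integer matrix with blocks Q₊₊ (m×m), Q₊₋ (m×n), Q₋₊ = Q₊₋ᵀ, Q₋₋ (n×n). Write S = (S⁺,S⁻), A = (A⁺,A⁻) ∈ ℤ^{m+n}. Then for every j ∈ ℕ the following identity holds in ℚ(q,a), where for d ∈ ℕ^{m+n} we set k = d₁+⋯+d_m: Σ_{d ∈ ℕ^{m+n}, d₁+⋯+d_{m+n}=j} (−q)^{S·d + k} · a^{A·d} · q^{d·Q·dᵀ + 2k²} · (q²;q²)_k · [k; d₁,…,d_m] · [j−k; d_{m+1},…,d_{m+n}] · [j;k]₊ · (a²q^{2−2j−2k};q²)_k / (q²;q²)_k = Σ_{e ∈ ℕ^{2m+n}, e₁+⋯+e_{2m+n}=j} (−q)^{S′·e} · a^{A′·e} · q^{e·Q′·eᵀ} · [j; e₁,…,e_{2m+n}], where S′ = (S⁺+1, S⁺+2, S⁻) ∈ ℤ^{2m+n}, A′ = (A⁺, A⁺+2, A⁻) ∈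 ℤ^{2m+n}, and Q′ is the symmetric (2m+n)×(2m+n) matrix whose 3×3 block decomposition (block sizes m, m, n) has rows [Q₊₊+2, Q₊₊+L, Q₊₋], [Q₊₊+U, Q₊₊−1, Q₊₋−1], [Q₋₊, Q₋₊−1, Q₋₋]. -/

import Mathlib

/-!
Why the identity holds. After cancelling the factors `(q²;q²)_k` and `(q²;q²)_{j-k}`, the summand
of the left-hand side carries `(x;q²)_k / ∏ᵢ (q²;q²)_{dᵢ}` with `x = a² q^{2-2j-2k}` and
`k = d₁+⋯+d_m`. The product `(x;q²)_k` is cut into consecutive blocks of lengths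
`d_m, …, d₁`, i.e. into `∏ᵢ (x q^{2∑_{i'>i} d_{i'}}; q²)_{dᵢ}` (`poch_sum`), and each block is
expanded by the finite `q`-binomial theorem (`poch_eq_sum`). This gives a sum over `β ≤ d⁺`
(`poch_sum_expand`).

With `α = d⁺ - β`, the pairs `(d, β)` correspond bijectively to the tuples `e = (α, β, d⁻)` of the
right-hand side, and corresponding terms agree (`term_eq`). The comparison of the powers of `q`
rests on two computations: collecting the exponents of an expanded product (`expansion_term`),
where `∑ᵢ βᵢ² + 2∑_{i<i'} βᵢ βᵢ' = |β|²`, and evaluating the quadratic form of `Q′` on `(α, β, γ)`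
(`quad_form`). Cutting the blocks from the last index to the first is what produces the matrix `L`,
rather than `U`, in the block pairing `α` with `β`.
-/

/-!
STATEMENT 2: The closure operation Cl(T−) on quiver data, UP case
(Lemma of Stošić–Wedrich, knot case).

Setup: `F = ℚ(q,a)` with `qv = q`, `av = a`.
`poch c N = (c;q²)_N`, `qq2 N = (q²;q²)_N`.
Quantum multinomials appear inline as quotients of `qq2`'s:
`[k; d₁,…,d_m] = qq2 k / ∏ qq2 dᵢ` and `[j;k]₊ = qq2 j / (qq2 k * qq2 (j-k))`.
The index set `ℕ^{m+n}` is modeled as `Fin m ⊕ Fin n → ℕ`, a symmetric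
`(m+n)×(m+n)` matrix as a symmetric matrix on `Fin m ⊕ Fin n` with blocks
`Q₊₊ = Q(inl,inl)`, `Q₊₋ = Q(inl,inr)`, etc.; `S = (S⁺,S⁻)` is `Sum.elim Sp Sm`.
`QclUP Q` is the 3×3-block matrix with rows `[Q₊₊+2, Q₊₊+L, Q₊₋]`,
`[Q₊₊+U, Q₊₊−1, Q₊₋−1]`, `[Q₋₊, Q₋₊−1, Q₋₋]`, where `L` is the strictly
lower-triangular all-ones matrix (entry `(i,j)` equal to 1 iff `j < i`) and `U = Lᵀ`.
-/

open Finset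

noncomputable section

/-- The field `ℚ(q,a)` of rational functions in two indeterminates over `ℚ`. -/
abbrev F : Type := FractionRing (MvPolynomial (Fin 2) ℚ)

/-- The indeterminate `q`. -/
def qv : F := algebraMap (MvPolynomial (Fin 2) ℚ) F (MvPolynomial.X 0)

/-- The indeterminate `a`. -/
def av : F := algebraMap (MvPolynomial (Fin 2) ℚ) F (MvPolynomial.X 1)

/-- The Pochhammer symbol `(c;q²)_N = ∏_{i=0}^{N-1} (1 - c q^{2i})`. -/
def poch (c : F) (N : ℕ) : F := ∏ i ∈ Finset.range N, (1 - c * qv ^ (2 * i))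

/-- `(q²;q²)_N = ∏_{i=1}^{N} (1 - q^{2i})`. -/
def qq2 (N : ℕ) : F := poch (qv ^ 2) N

/-- The finset of `ι`-tuples of naturals with total sum `N`. -/
def tuples (ι : Type) [Fintype ι] [DecidableEq ι] (N : ℕ) : Finset (ι → ℕ) :=
  (Fintype.piFinset fun _ : ι => Finset.range (N + 1)).filter fun d => ∑ x, d x = N

/-- The matrix `Q′` of the UP closure: block rows
`[Q₊₊+2, Q₊₊+L, Q₊₋]`, `[Q₊₊+U, Q₊₊−1, Q₊₋−1]`, `[Q₋₊, Q₋₊−1, Q₋₋]`. -/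
def QclUP {m n : ℕ} (Q : Matrix (Fin m ⊕ Fin n) (Fin m ⊕ Fin n) ℤ) :
    Matrix (Fin m ⊕ Fin m ⊕ Fin n) (Fin m ⊕ Fin m ⊕ Fin n) ℤ :=
  Matrix.of fun x y =>
    match x, y with
    | Sum.inl i, Sum.inl j => Q (Sum.inl i) (Sum.inl j) + 2
    | Sum.inl i, Sum.inr (Sum.inl j) => Q (Sum.inl i) (Sum.inl j) + (if j < i then 1 else 0)
    | Sum.inl i, Sum.inr (Sum.inr j) => Q (Sum.inl i) (Sum.inr j)
    | Sum.inr (Sum.inl i), Sum.inl j => Q (Sum.inl i) (Sum.inl j) + (if i < j then 1 else 0)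
    | Sum.inr (Sum.inl i), Sum.inr (Sum.inl j) => Q (Sum.inl i) (Sum.inl j) - 1
    | Sum.inr (Sum.inl i), Sum.inr (Sum.inr j) => Q (Sum.inl i) (Sum.inr j) - 1
    | Sum.inr (Sum.inr i), Sum.inl j => Q (Sum.inr i) (Sum.inl j)
    | Sum.inr (Sum.inr i), Sum.inr (Sum.inl j) => Q (Sum.inr i) (Sum.inl j) - 1
    | Sum.inr (Sum.inr i), Sum.inr (Sum.inr j) => Q (Sum.inr i) (Sum.inr j)

/-! ### Nonvanishing and Pochhammer recursions -/

theorem qv_ne_zero : qv ≠ 0 := by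
  unfold qv
  rw [Ne, FaithfulSMul.algebraMap_eq_zero_iff]
  exact MvPolynomial.X_ne_zero 0

theorem av_ne_zero : av ≠ 0 := by
  unfold av
  rw [Ne, FaithfulSMul.algebraMap_eq_zero_iff]
  exact MvPolynomial.X_ne_zero 1

/-- `q` is not a root of unity: evaluate `q^N = 1` at `q = 0`. -/
theorem qv_pow_ne_one (N : ℕ) (hN : N ≠ 0) : qv ^ N ≠ 1 := by
  unfold qv
  rw [← map_pow, ← map_one (algebraMap (MvPolynomial (Fin 2) ℚ) F)]
  intro h
  have h1 := FaithfulSMul.algebraMap_injective (MvPolynomial (Fin 2) ℚ) F h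
  have h2 := congrArg (MvPolynomial.eval (fun _ => (0 : ℚ))) h1
  simp [hN] at h2

theorem poch_succ (c : F) (N : ℕ) : poch c (N + 1) = poch c N * (1 - c * qv ^ (2 * N)) := by
  simp [poch, Finset.prod_range_succ]

theorem poch_add (c : F) (M N : ℕ) :
    poch c (M + N) = poch c M * poch (c * qv ^ (2 * M)) N := by
  simp only [poch, Finset.prod_range_add]
  congr 1
  refine Finset.prod_congr rfl fun i _ => ?_
  ring

theorem qq2_succ (N : ℕ) : qq2 (N + 1) = qq2 N * (1 - qv ^ (2 * (N + 1))) := by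
  rw [qq2, poch_succ, ← qq2]
  ring

theorem one_sub_ne (N : ℕ) : 1 - qv ^ (2 * (N + 1)) ≠ 0 := by
  rw [sub_ne_zero]
  exact (qv_pow_ne_one _ (by omega)).symm

theorem qq2_zero : qq2 0 = 1 := by simp [qq2, poch]

theorem qq2_ne_zero (N : ℕ) : qq2 N ≠ 0 := by
  induction N with
  | zero => simp [qq2_zero]
  | succ N ih => rw [qq2_succ]; exact mul_ne_zero ih (one_sub_ne N)

/-! ### The finite `q`-binomial theorem -/

/-- The quantum binomial `[N; k]₊`, extended by `0` to `k > N`. -/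
def gb (N k : ℕ) : F := if k ≤ N then qq2 N / (qq2 k * qq2 (N - k)) else 0

/-- The `q`-Pascal rule in base `q²`. -/
theorem gb_pascal (N k : ℕ) (hk : k ≤ N) :
    gb (N + 1) (k + 1) = gb N (k + 1) + qv ^ (2 * (N - k)) * gb N k := by
  obtain ⟨s, rfl⟩ := Nat.exists_eq_add_of_le hk
  have hk0 := qq2_ne_zero k
  have h1 := one_sub_ne k
  rcases s with _ | s
  · have h2 := qq2_ne_zero (k + 1)
    simp [gb, qq2_zero, hk0, h2]
  · have hs0 := qq2_ne_zero s
    have h2 := one_sub_ne s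
    have e1 : k + (s + 1) + 1 - (k + 1) = s + 1 := by omega
    have e2 : k + (s + 1) - (k + 1) = s := by omega
    have e3 : k + (s + 1) - k = s + 1 := by omega
    rw [gb, gb, gb, if_pos (by omega), if_pos (by omega), if_pos (by omega), e1, e2, e3,
      qq2_succ (k + (s + 1)), qq2_succ k, qq2_succ s]
    field_simp
    ring

theorem gb_zero_right (N : ℕ) : gb N 0 = 1 := by
  simp [gb, qq2_zero, qq2_ne_zero]

/-- The finite `q`-binomial theorem in base `q²`. -/
theorem poch_eq_sum (y : F) (N : ℕ) :
    poch y N = ∑ b ∈ Finset.range (N + 1), gb N b * ((-y) ^ b * qv ^ (b * (b - 1))) := by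
  induction N with
  | zero => simp [poch, gb_zero_right]
  | succ N ih =>
    rw [Finset.sum_range_succ', gb_zero_right]
    have h1 : ∀ b ∈ Finset.range (N + 1),
        gb (N + 1) (b + 1) * ((-y) ^ (b + 1) * qv ^ ((b + 1) * (b + 1 - 1))) =
        gb N (b + 1) * ((-y) ^ (b + 1) * qv ^ ((b + 1) * (b + 1 - 1))) +
        (-y * qv ^ (2 * N)) * (gb N b * ((-y) ^ b * qv ^ (b * (b - 1)))) := by
      intro b hb
      have hb' : b ≤ N := by simpa [Nat.lt_succ_iff] using hb
      rw [gb_pascal N b hb', add_mul]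
      congr 1
      have e : qv ^ (2 * (N - b)) * qv ^ ((b + 1) * (b + 1 - 1)) =
          qv ^ (2 * N) * qv ^ (b * (b - 1)) := by
        rw [← pow_add, ← pow_add]
        congr 1
        obtain ⟨s, rfl⟩ := Nat.exists_eq_add_of_le hb'
        rcases b with _ | b
        · simp
        · have : b + 1 + s - (b + 1) = s := by omega
          simp only [this, Nat.add_sub_cancel]
          ring
      linear_combination gb N b * (-y) ^ (b + 1) * e
    rw [Finset.sum_congr rfl h1, Finset.sum_add_distrib, ← Finset.mul_sum, ← ih, poch_succ]
    -- The sum for `N` over `b ≤ N + 1` equals the one over `b ≤ N`, since `gb N (N + 1) = 0`.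
    have h2 := Finset.sum_range_succ'
      (fun b => gb N b * ((-y) ^ b * qv ^ (b * (b - 1)))) (N + 1)
    have h3 : gb N (N + 1) = 0 := by simp [gb]
    rw [Finset.sum_range_succ, ← ih, h3, gb_zero_right] at h2
    linear_combination h2

/-! ### Multi-index expansion of a Pochhammer symbol -/

/-- Splitting `(x;q²)_{d₁+⋯+d_m}` into consecutive blocks, the last index coming first. -/
theorem poch_sum (m : ℕ) (d : Fin m → ℕ) (x : F) :
    poch x (∑ i, d i) =
      ∏ i, poch (x * qv ^ (2 * ∑ i', if i < i' then d i' else 0)) (d i) := by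
  induction m with
  | zero => simp [poch]
  | succ m ih =>
    rw [Fin.sum_univ_succ, add_comm, poch_add, ih, Fin.prod_univ_succ, mul_comm]
    simp [Fin.sum_univ_succ, Fin.succ_pos]

theorem prod_zpow_sum {ι : Type} (s : Finset ι) (f : ι → ℤ) (c : F) (hc : c ≠ 0) :
    ∏ i ∈ s, c ^ f i = c ^ ∑ i ∈ s, f i := by
  classical
  induction s using Finset.induction_on with
  | empty => simp
  | insert i s hi ih => rw [Finset.prod_insert hi, Finset.sum_insert hi, zpow_add₀ hc, ih]

/-- The cross term `∑_{i < i'} βᵢ αᵢ'` produced by the blocks `L` and `U` of `Q′`. -/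
def crossTerm {m : ℕ} (α β : Fin m → ℕ) : ℤ :=
  ∑ i, ∑ i', (β i : ℤ) * (if i < i' then (α i' : ℤ) else 0)

/-- The square of a sum, with the off-diagonal part written as a cross term. -/
theorem sum_sq {m : ℕ} (β : Fin m → ℕ) :
    (∑ i, (β i : ℤ)) ^ 2 = ∑ i, (β i : ℤ) ^ 2 + 2 * crossTerm β β := by
  have h : ∀ i i', (β i : ℤ) * β i' = (if i = i' then (β i : ℤ) * β i' else 0) +
      (β i : ℤ) * (if i < i' then (β i' : ℤ) else 0) +
      (β i' : ℤ) * (if i' < i then (β i : ℤ) else 0) := by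
    intro i i'
    rcases lt_trichotomy i i' with h | h | h
    · simp [h, h.ne, h.not_gt]
    · simp [h]
    · simp [h, h.ne', h.not_gt, mul_comm]
  rw [sq, Finset.sum_mul_sum]
  rw [Finset.sum_congr rfl fun i _ => Finset.sum_congr rfl fun i' _ => h i i']
  simp only [Finset.sum_add_distrib]
  rw [Finset.sum_comm (f := fun i i' => (β i' : ℤ) * (if i' < i then (β i : ℤ) else 0))]
  simp [crossTerm, sq]
  ring

theorem crossTerm_add {m : ℕ} (α β : Fin m → ℕ) :
    ∑ i, (β i : ℤ) * ∑ i', (if i < i' then ((α i' + β i' : ℕ) : ℤ) else 0) =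
      crossTerm α β + crossTerm β β := by
  simp only [crossTerm, ← Finset.sum_add_distrib, Finset.mul_sum, ← mul_add]
  refine Finset.sum_congr rfl fun i _ => Finset.sum_congr rfl fun i' _ => ?_
  split_ifs <;> simp

/-- One summand of the expansion of `(a² q^c; q²)_k`, with all powers collected. -/
theorem expansion_term {m : ℕ} (α β : Fin m → ℕ) (c : ℤ) :
    ∏ i, (gb (α i + β i) (β i) *
      ((-(av ^ 2 * qv ^ c * qv ^ (2 * ∑ i', if i < i' then α i' + β i' else 0))) ^ β i *
        qv ^ (β i * (β i - 1)))) =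
      (∏ i, gb (α i + β i) (β i)) * (-1) ^ (∑ i, (β i : ℤ)) * av ^ (2 * ∑ i, (β i : ℤ)) *
        qv ^ (c * (∑ i, (β i : ℤ)) + (∑ i, (β i : ℤ)) ^ 2 - (∑ i, (β i : ℤ))
          + 2 * crossTerm α β) := by
  have hq := qv_ne_zero
  have key : ∀ i, (gb (α i + β i) (β i) *
      ((-(av ^ 2 * qv ^ c * qv ^ (2 * ∑ i', if i < i' then α i' + β i' else 0))) ^ β i *
        qv ^ (β i * (β i - 1)))) = gb (α i + β i) (β i) * (-1 : F) ^ (β i : ℤ) *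
        av ^ (2 * (β i : ℤ)) * qv ^ (c * β i + ((β i : ℤ) ^ 2 - β i) +
          2 * ((β i : ℤ) * ∑ i', (if i < i' then ((α i' + β i' : ℕ) : ℤ) else 0))) := by
    intro i
    have e1 : qv ^ (β i * (β i - 1)) = qv ^ ((β i : ℤ) ^ 2 - β i) := by
      rw [← zpow_natCast]
      congr 1
      rcases β i with _ | b
      · simp
      · push_cast
        ring
    have e2 : (∑ i', (if i < i' then ((α i' + β i' : ℕ) : ℤ) else 0)) =
        ((∑ i', if i < i' then α i' + β i' else 0 : ℕ) : ℤ) := by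
      push_cast
      rfl
    rw [e1, e2]
    generalize (∑ i', if i < i' then α i' + β i' else 0) = t
    rw [zpow_add₀ hq, zpow_add₀ hq, neg_eq_neg_one_mul, mul_pow, mul_pow, mul_pow,
      zpow_mul qv c, zpow_natCast, zpow_natCast, zpow_mul av, zpow_natCast,
      show (2 * ((β i : ℤ) * (t : ℤ))) = ((2 * t * β i : ℕ) : ℤ) by push_cast; ring,
      zpow_natCast, pow_mul qv (2 * t)]
    norm_cast
    ring
  rw [Finset.prod_congr rfl fun i _ => key i]
  simp only [Finset.prod_mul_distrib]
  rw [prod_zpow_sum _ _ _ hq, prod_zpow_sum _ _ _ av_ne_zero, prod_zpow_sum _ _ _ (by simp),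
    ← Finset.mul_sum]
  congr 2
  simp only [Finset.sum_add_distrib, Finset.sum_sub_distrib, ← Finset.mul_sum]
  rw [crossTerm_add, sum_sq]
  ring

/-! ### Matching the terms of the two sides -/

/-- The quadratic form of `Q′` at `(α, β, γ)` is that of `Q` at `(α + β, γ)` plus
`2|α|² - |β|² - 2|β||γ|` and twice the cross term. -/
theorem quad_form {m n : ℕ} (Q : Matrix (Fin m ⊕ Fin n) (Fin m ⊕ Fin n) ℤ)
    (e : Fin m ⊕ Fin m ⊕ Fin n → ℕ) (α β : Fin m → ℕ) (γ : Fin n → ℕ)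
    (he : e = Sum.elim α (Sum.elim β γ)) :
    ∑ x, ∑ y, (e x : ℤ) * QclUP Q x y * (e y : ℤ) =
      ∑ x, ∑ y, ((Sum.elim (fun i => α i + β i) γ x : ℕ) : ℤ) * Q x y *
        ((Sum.elim (fun i => α i + β i) γ y : ℕ) : ℤ) +
      2 * (∑ i, (α i : ℤ)) ^ 2 - (∑ i, (β i : ℤ)) ^ 2 -
      2 * ((∑ i, (β i : ℤ)) * ∑ i, (γ i : ℤ)) + 2 * crossTerm α β := by
  subst he
  have c1 : ∑ i, ∑ i', (α i : ℤ) * (if i' < i then 1 else 0) * (β i' : ℤ) = crossTerm α β := by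
    rw [crossTerm, Finset.sum_comm]
    refine Finset.sum_congr rfl fun i _ => Finset.sum_congr rfl fun i' _ => ?_
    split_ifs <;> ring
  have c2 : ∑ i, ∑ i', (β i : ℤ) * (if i < i' then 1 else 0) * (α i' : ℤ) = crossTerm α β := by
    rw [crossTerm]
    refine Finset.sum_congr rfl fun i _ => Finset.sum_congr rfl fun i' _ => ?_
    split_ifs <;> ring
  have c3 : ∑ i, ∑ i', (α i : ℤ) * 2 * (α i' : ℤ) = 2 * (∑ i, (α i : ℤ)) ^ 2 := by
    rw [sq, Finset.sum_mul_sum, Finset.mul_sum]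
    refine Finset.sum_congr rfl fun i _ => ?_
    rw [Finset.mul_sum]
    refine Finset.sum_congr rfl fun i' _ => ?_
    ring
  have c4 : ∑ i, ∑ i', (β i : ℤ) * 1 * (β i' : ℤ) = (∑ i, (β i : ℤ)) ^ 2 := by
    rw [sq, Finset.sum_mul_sum]
    simp
  have c5 : ∑ i, ∑ i', (β i : ℤ) * 1 * (γ i' : ℤ) = (∑ i, (β i : ℤ)) * ∑ i, (γ i : ℤ) := by
    rw [Finset.sum_mul_sum]
    simp
  have c6 : ∑ i, ∑ i', (γ i : ℤ) * 1 * (β i' : ℤ) = (∑ i, (β i : ℤ)) * ∑ i, (γ i : ℤ) := by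
    rw [mul_comm, Finset.sum_mul_sum]
    simp
  simp only [Fintype.sum_sum_type, Sum.elim_inl, Sum.elim_inr, QclUP, Matrix.of_apply, mul_add,
    add_mul, mul_sub, sub_mul, Finset.sum_add_distrib, Finset.sum_sub_distrib, Nat.cast_add]
  rw [c1, c2, c3, c4, c5, c6]
  ring

theorem gb_prod {m : ℕ} (α β : Fin m → ℕ) :
    ∏ i, gb (α i + β i) (β i) =
      (∏ i, qq2 (α i + β i)) / ((∏ i, qq2 (β i)) * ∏ i, qq2 (α i)) := by
  rw [← Finset.prod_mul_distrib, ← Finset.prod_div_distrib]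
  refine Finset.prod_congr rfl fun i _ => ?_
  simp [gb]

/-- Expansion of `(x;q²)_{d₁+⋯+d_m}` over all `β ≤ d`. -/
theorem poch_sum_expand {m : ℕ} (d : Fin m → ℕ) (x : F) :
    poch x (∑ i, d i) = ∑ β ∈ Fintype.piFinset fun i => Finset.range (d i + 1),
      ∏ i, (gb (d i) (β i) *
        ((-(x * qv ^ (2 * ∑ i', if i < i' then d i' else 0))) ^ β i *
          qv ^ (β i * (β i - 1)))) := by
  rw [poch_sum]
  simp only [poch_eq_sum]
  rw [Finset.prod_univ_sum]

theorem mem_tuples {ι : Type} [Fintype ι] [DecidableEq ι] {N : ℕ} {d : ι → ℕ} :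
    d ∈ tuples ι N ↔ ∑ x, d x = N := by
  simp only [tuples, Finset.mem_filter, Fintype.mem_piFinset, Finset.mem_range,
    and_iff_right_iff_imp]
  rintro rfl i
  exact Nat.lt_succ_of_le (Finset.single_le_sum (f := d) (fun _ _ => Nat.zero_le _)
    (Finset.mem_univ i))

/-- The term of the left-hand side indexed by `(α + β, γ)` and by the expansion index `β` is the
term of the right-hand side indexed by `(α, β, γ)`. -/
theorem term_eq {m n : ℕ} (Q : Matrix (Fin m ⊕ Fin n) (Fin m ⊕ Fin n) ℤ)
    (Sp Ap : Fin m → ℤ) (Sm Am : Fin n → ℤ) (j : ℕ) (α β : Fin m → ℕ) (γ : Fin n → ℕ)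
    (k : ℕ) (hk : k = ∑ i, (α i + β i)) (hj : j = k + ∑ i, γ i)
    (d : Fin m ⊕ Fin n → ℕ) (hd : d = Sum.elim (fun i => α i + β i) γ)
    (e : Fin m ⊕ Fin m ⊕ Fin n → ℕ) (he : e = Sum.elim α (Sum.elim β γ)) :
    (-qv) ^ ((∑ x, Sum.elim Sp Sm x * (d x : ℤ)) + (k : ℤ)) *
          av ^ (∑ x, Sum.elim Ap Am x * (d x : ℤ)) *
          qv ^ ((∑ x, ∑ y, (d x : ℤ) * Q x y * (d y : ℤ)) + 2 * (k : ℤ) ^ 2) *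
          qq2 k *
          (qq2 k / ∏ i, qq2 (d (Sum.inl i))) *
          (qq2 (j - k) / ∏ i, qq2 (d (Sum.inr i))) *
          (qq2 j / (qq2 k * qq2 (j - k))) *
          ((∏ i, (gb (d (Sum.inl i)) (β i) *
            ((-(av ^ 2 * qv ^ ((2 : ℤ) - 2 * (j : ℤ) - 2 * (k : ℤ)) *
              qv ^ (2 * ∑ i', if i < i' then d (Sum.inl i') else 0))) ^ β i *
              qv ^ (β i * (β i - 1))))) / qq2 k) =
        (-qv) ^
            (∑ x, Sum.elim (fun i => Sp i + 1) (Sum.elim (fun i => Sp i + 2) Sm) x * (e x : ℤ)) *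
          av ^ (∑ x, Sum.elim Ap (Sum.elim (fun i => Ap i + 2) Am) x * (e x : ℤ)) *
          qv ^ (∑ x, ∑ y, (e x : ℤ) * QclUP Q x y * (e y : ℤ)) *
          (qq2 j / ∏ x, qq2 (e x)) := by
  rw [quad_form Q e α β γ he]
  have hS : (∑ x, Sum.elim (fun i => Sp i + 1) (Sum.elim (fun i => Sp i + 2) Sm) x * (e x : ℤ)) =
      (∑ x, Sum.elim Sp Sm x * (d x : ℤ)) + (k : ℤ) + ∑ i, (β i : ℤ) := by
    subst hd he hk
    simp only [Fintype.sum_sum_type, Sum.elim_inl, Sum.elim_inr, Nat.cast_add, Nat.cast_sum,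
      mul_add, add_mul, Finset.sum_add_distrib, ← Finset.mul_sum]
    ring
  have hA : (∑ x, Sum.elim Ap (Sum.elim (fun i => Ap i + 2) Am) x * (e x : ℤ)) =
      (∑ x, Sum.elim Ap Am x * (d x : ℤ)) + 2 * ∑ i, (β i : ℤ) := by
    subst hd he
    simp only [Fintype.sum_sum_type, Sum.elim_inl, Sum.elim_inr, Nat.cast_add,
      mul_add, add_mul, Finset.sum_add_distrib, ← Finset.mul_sum]
    ring
  rw [hS, hA]
  have hP : ∏ x, qq2 (e x) = (∏ i, qq2 (α i)) * ((∏ i, qq2 (β i)) * ∏ i, qq2 (γ i)) := by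
    subst he
    simp [Fintype.prod_sum_type]
  rw [hP]
  generalize (∑ x, Sum.elim Sp Sm x * (d x : ℤ)) = s
  generalize (∑ x, Sum.elim Ap Am x * (d x : ℤ)) = t
  have hkz : (k : ℤ) = (∑ i, (α i : ℤ)) + ∑ i, (β i : ℤ) := by
    subst hk
    push_cast
    rw [Finset.sum_add_distrib]
  have hjz : (j : ℤ) = k + ∑ i, (γ i : ℤ) := by
    subst hj
    push_cast
    rfl
  subst hd
  simp only [Sum.elim_inl, Sum.elim_inr]
  rw [expansion_term, gb_prod]
  generalize (∑ x, ∑ y, ((Sum.elim (fun i => α i + β i) γ x : ℕ) : ℤ) * Q x y *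
        ((Sum.elim (fun i => α i + β i) γ y : ℕ) : ℤ)) = w
  have hq := qv_ne_zero
  have ha := av_ne_zero
  have pne : ∀ {r : ℕ} (f : Fin r → ℕ), ∏ i, qq2 (f i) ≠ 0 := fun f =>
    Finset.prod_ne_zero_iff.mpr fun i _ => qq2_ne_zero _
  have h1 := pne α
  have h2 := pne β
  have h3 := pne γ
  have h4 := pne fun i => α i + β i
  have h5 := qq2_ne_zero k
  have h6 := qq2_ne_zero (j - k)
  generalize crossTerm α β = c at *
  generalize hb : (∑ i, (β i : ℤ)) = b at *
  generalize (∑ i, (α i : ℤ)) = a at *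
  generalize (∑ i, (γ i : ℤ)) = g at *
  have hqq : ∀ z : ℤ, (-qv) ^ z = (-1) ^ z * qv ^ z := fun z => by
    rw [neg_eq_neg_one_mul, mul_zpow]
  rw [hqq, hqq, zpow_add₀ (a := (-1 : F)) (by simp) (s + k) b, zpow_add₀ ha]
  have hexp : qv ^ (s + k) * qv ^ (w + 2 * (k : ℤ) ^ 2) *
      qv ^ ((2 - 2 * (j : ℤ) - 2 * k) * b + b ^ 2 - b + 2 * c) =
      qv ^ (s + k + b) * qv ^ (w + 2 * a ^ 2 - b ^ 2 - 2 * (b * g) + 2 * c) := by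
    rw [← zpow_add₀ hq, ← zpow_add₀ hq, ← zpow_add₀ hq]
    congr 1
    rw [hjz, hkz]
    ring
  generalize qv ^ (s + k) = x1 at *
  generalize qv ^ (w + 2 * (k : ℤ) ^ 2) = x2 at *
  generalize qv ^ ((2 - 2 * (j : ℤ) - 2 * k) * b + b ^ 2 - b + 2 * c) = x3 at *
  generalize qv ^ (s + k + b) = x4 at *
  generalize qv ^ (w + 2 * a ^ 2 - b ^ 2 - 2 * (b * g) + 2 * c) = x5 at *
  generalize (-1 : F) ^ (s + (k : ℤ)) = y1
  generalize (-1 : F) ^ b = y2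
  generalize av ^ t = y3
  generalize av ^ (2 * b) = y4
  field_simp
  linear_combination y1 * y2 * y3 * y4 * qq2 j * hexp

theorem statement2 (m n : ℕ)
    (Q : Matrix (Fin m ⊕ Fin n) (Fin m ⊕ Fin n) ℤ) (hQ : Q.IsSymm)
    (Sp Ap : Fin m → ℤ) (Sm Am : Fin n → ℤ) (j : ℕ) :
    (∑ d ∈ tuples (Fin m ⊕ Fin n) j,
      (let k : ℕ := ∑ i, d (Sum.inl i);
        (-qv) ^ ((∑ x, Sum.elim Sp Sm x * (d x : ℤ)) + (k : ℤ)) *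
          av ^ (∑ x, Sum.elim Ap Am x * (d x : ℤ)) *
          qv ^ ((∑ x, ∑ y, (d x : ℤ) * Q x y * (d y : ℤ)) + 2 * (k : ℤ) ^ 2) *
          qq2 k *
          (qq2 k / ∏ i, qq2 (d (Sum.inl i))) *
          (qq2 (j - k) / ∏ i, qq2 (d (Sum.inr i))) *
          (qq2 j / (qq2 k * qq2 (j - k))) *
          (poch (av ^ 2 * qv ^ ((2 : ℤ) - 2 * (j : ℤ) - 2 * (k : ℤ))) k / qq2 k))) =
      ∑ e ∈ tuples (Fin m ⊕ Fin m ⊕ Fin n) j,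
        (-qv) ^
            (∑ x, Sum.elim (fun i => Sp i + 1) (Sum.elim (fun i => Sp i + 2) Sm) x * (e x : ℤ)) *
          av ^ (∑ x, Sum.elim Ap (Sum.elim (fun i => Ap i + 2) Am) x * (e x : ℤ)) *
          qv ^ (∑ x, ∑ y, (e x : ℤ) * QclUP Q x y * (e y : ℤ)) *
          (qq2 j / ∏ x, qq2 (e x)) := by
  -- Expand, then use the bijection `(d, β) ↦ (d⁺ - β, β, d⁻)`; the subtraction in `ℕ` is exact
  -- since `β ≤ d⁺`.
  simp only [poch_sum_expand (fun i => _), Finset.sum_div, Finset.mul_sum]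
  rw [Finset.sum_sigma']
  refine Finset.sum_bij'
    (fun p _ => Sum.elim (fun i => p.1 (Sum.inl i) - p.2 i)
      (Sum.elim p.2 fun i => p.1 (Sum.inr i)))
    (fun e _ => ⟨Sum.elim (fun i => e (Sum.inl i) + e (Sum.inr (Sum.inl i)))
      fun i => e (Sum.inr (Sum.inr i)), fun i => e (Sum.inr (Sum.inl i))⟩) ?_ ?_ ?_ ?_ ?_
  · rintro ⟨d, β⟩ hp
    simp only [Finset.mem_sigma, mem_tuples, Fintype.mem_piFinset, Finset.mem_range,
      Nat.lt_succ_iff] at hp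
    obtain ⟨hd, hβ⟩ := hp
    simp only [mem_tuples, Fintype.sum_sum_type, Sum.elim_inl, Sum.elim_inr] at hd ⊢
    rw [← hd, ← add_assoc, ← Finset.sum_add_distrib]
    congr 1
    exact Finset.sum_congr rfl fun i _ => Nat.sub_add_cancel (hβ i)
  · intro e he
    simp only [mem_tuples, Fintype.sum_sum_type] at he
    simp only [Finset.mem_sigma, mem_tuples, Fintype.sum_sum_type, Sum.elim_inl, Sum.elim_inr,
      Fintype.mem_piFinset, Finset.mem_range, Finset.sum_add_distrib]
    exact ⟨by omega, fun i => by omega⟩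
  · rintro ⟨d, β⟩ hp
    simp only [Finset.mem_sigma, mem_tuples, Fintype.mem_piFinset, Finset.mem_range,
      Nat.lt_succ_iff] at hp
    obtain ⟨hd, hβ⟩ := hp
    simp only [Sum.elim_inl, Sum.elim_inr, Sigma.mk.injEq, heq_eq_eq, and_true]
    funext x
    rcases x with i | i
    · exact Nat.sub_add_cancel (hβ i)
    · rfl
  · intro e he
    funext x
    rcases x with i | i | i <;> simp
  · rintro ⟨d, β⟩ hp
    simp only [Finset.mem_sigma, mem_tuples, Fintype.mem_piFinset, Finset.mem_range,
      Nat.lt_succ_iff] at hp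
    obtain ⟨hd, hβ⟩ := hp
    have hc : ∀ i, d (Sum.inl i) - β i + β i = d (Sum.inl i) := fun i =>
      Nat.sub_add_cancel (hβ i)
    have hj : j = ∑ i, d (Sum.inl i) + ∑ i, d (Sum.inr i) := by
      rw [← hd, Fintype.sum_sum_type]
    have hd' : d = Sum.elim (fun i => d (Sum.inl i) - β i + β i) fun i => d (Sum.inr i) := by
      funext x
      rcases x with i | i
      · exact (hc i).symm
      · rfl
    have hk : ∑ i, d (Sum.inl i) = ∑ i, (d (Sum.inl i) - β i + β i) := by
      simp only [hc]
    have h := term_eq Q Sp Ap Sm Am j (fun i => d (Sum.inl i) - β i) β (fun i => d (Sum.inr i))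
      (∑ i, d (Sum.inl i)) hk hj d hd' _ rfl
    simp only [Finset.mul_sum] at h
    exact h

end
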